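/- Let 1 ≤ p < ∞, 1 ≤ q < ∞, r ∈ ℕ and 0 < α < r. There exist constants c, C > 0 such that for every f ∈ X^p: c ( ‖f‖_{X^p} + (∫₀^∞ (s^{−α} Ω^r_p(s, f))^q ds/s)^{1/q} ) ≤ ‖f‖_{X^p} + (∫₀^∞ (s^{−α} K(s^r, f, X^p, W^r_p))^q ds/s)^{1/q} ≤ C ( ‖f‖_{X^p} + (∫₀^∞ (s^{−α} Ω^r_p(s, f))^q ds/s)^{1/q} ); in particular one of the two quantities is finite if and only if the other is (so the Besov–Mellin space defined by the modulus-of-continuity norm coincides with the interpolation space (X^p, W^r_p)^K_{α/r,q}). -/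

import Mathlib

/-!
In the exponential chart `y ↦ (e^{y₁}, …, e^{yₙ})` the Mellin measure becomes Lebesgue measure and
the dilations become translations, so the `U_j` are commuting strongly continuous one-parameter
groups of isometries of a Banach space `E`. The rest of the argument only uses this structure
(`IsCommGroups`). It establishes, with constants depending only on `n` and `r`,

* `Ω^r(s,f) ≤ A K(s^r,f)` (`IsCommGroups.mixedMod_le_Kfun`), and
* `K(s^r,f) ≤ A (Ω^r(s,f) + min(1,s^r) ‖f‖)` (`IsCommGroups.exists_equiv`).

For the first, split `f = f₀ + f₁`: an `r`-fold difference of `f₀` is at most `2^r ‖f₀‖`, and an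
`r`-fold difference of `f₁` is at most `s^r` times a derivative of order `r` by the mean value
inequality.

For the second, let `M_j = s⁻¹ ∫₀ˢ U_j(τ) dτ`, `P = ∏ⱼ M_j` and `f₁ = (I - (I - P^r)^r) f`.
Since `I - P^r` is a multiple of `I - P`, and `I - P` telescopes into a combination of the
`M_j - I`, the error `f - f₁ = (I - P^r)^r f` is a bounded combination of averages of `r`-fold
differences, hence is `O(Ω^r(s,f))`. On the other hand `I - (I - P^r)^r = P^r R` with `R` bounded,
and `Θ_j M_j = s⁻¹ (U_j(s) - I)`; as `P^r` contains `r` factors of every `M_j`, each derivative of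
order `r` of `f₁` is a bounded operator applied to `s^{-r}` times an `r`-fold difference of `f`. So
`s^r ‖f₁‖_{W^r}` is bounded by a multiple of `Ω^r(s,f) + s^r ‖f‖`. For `s ≥ 1` the trivial bound
`K(s^r,f) ≤ ‖f‖` suffices. All these operators commute; the algebra is carried out in a commutative
ring `A` with a homomorphism `φ` to the operators on `E`, which can be taken to be the double
centralizer of the groups (`IsCommGroups.exists_commRing`).

Finally, `s^{-α} min(1,s^r)` has finite `L^q(ds/s)` norm because `0 < α < r`, so the two pointwise
estimates integrate to the equivalence of the norms (`besovSemi_le`).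
-/

open MeasureTheory Filter Topology ENNReal

noncomputable section

/-- `g` is the value at `f` of the infinitesimal generator of the
strongly continuous one-parameter group `T`. -/
def GenDeriv {E : Type*} [NormedAddCommGroup E] [NormedSpace ℂ E]
    (T : ℝ → E →L[ℂ] E) (f g : E) : Prop :=
  Filter.Tendsto (fun t : ℝ => t⁻¹ • (T t f - f)) (𝓝[≠] (0 : ℝ)) (𝓝 g)

/-- The measure `dμ = dx₁⋯dxₙ/(x₁⋯xₙ)` on `(0,∞)ⁿ ⊂ ℝⁿ`. -/
def mellinMeasure (n : ℕ) : Measure (Fin n → ℝ) :=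
  ((volume : Measure (Fin n → ℝ)).restrict {x | ∀ i, 0 < x i}).withDensity
    fun x => ∏ i, ENNReal.ofReal (x i)⁻¹

/-- Dilation of the `j`-th coordinate by `e^t`. -/
def mellinDilate {n : ℕ} (j : Fin n) (t : ℝ) (x : Fin n → ℝ) : Fin n → ℝ :=
  Function.update x j (Real.exp t * x j)

/-- `U` is the family of Mellin translation groups `(U_j(t)f)(x) = f(x₁,…,e^t x_j,…,xₙ)`. -/
def IsMellinTranslation {n : ℕ} (p : ℝ≥0∞) [Fact (1 ≤ p)]
    (U : Fin n → ℝ → (Lp ℂ p (mellinMeasure n) →L[ℂ] Lp ℂ p (mellinMeasure n))) : Prop :=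
  ∀ (j : Fin n) (t : ℝ) (f : Lp ℂ p (mellinMeasure n)),
    (U j t f : (Fin n → ℝ) → ℂ) =ᵐ[mellinMeasure n] fun x => f (mellinDilate j t x)

/-- Iterated generator: `IsIterDeriv U [j₁,…,j_k] f g` means `g = Θ_{j₁}⋯Θ_{j_k} f`. -/
def IsIterDeriv {E : Type*} [NormedAddCommGroup E] [NormedSpace ℂ E] {n : ℕ}
    (U : Fin n → ℝ → E →L[ℂ] E) : List (Fin n) → E → E → Prop
  | [], f, g => g = f
  | j :: L, f, g => ∃ h, IsIterDeriv U L f h ∧ GenDeriv (U j) h g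

/-- Modulus of continuity `ω^m(s,f) = sup_{0≤τ≤s} ‖(T(τ)-I)^m f‖`. -/
def omegaMod {E : Type*} [NormedAddCommGroup E] [NormedSpace ℂ E]
    (T : ℝ → E →L[ℂ] E) (m : ℕ) (s : ℝ) (f : E) : ℝ :=
  sSup ((fun τ => ‖((T τ - 1) ^ m) f‖) '' Set.Icc 0 s)

/-- Mixed modulus of continuity
`Ω^r(s,f) = Σ_{j₁,…,j_r} sup_{0≤τᵢ≤s} ‖(U_{j₁}(τ₁)-I)⋯(U_{j_r}(τ_r)-I) f‖`. -/
def mixedMod {E : Type*} [NormedAddCommGroup E] [NormedSpace ℂ E] {n : ℕ}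
    (U : Fin n → ℝ → E →L[ℂ] E) (r : ℕ) (s : ℝ) (f : E) : ℝ :=
  ∑ J : Fin r → Fin n,
    sSup ((fun τ : Fin r → ℝ => ‖((List.ofFn fun i => U (J i) (τ i) - 1).prod) f‖) ''
      Set.univ.pi fun _ => Set.Icc 0 s)

/-- The list `[1,…,1,2,…,2,…]` encoding the operator `Θ₁^{a₁}⋯Θₙ^{aₙ}`. -/
def multiIndexList {n : ℕ} (a : Fin n → ℕ) : List (Fin n) :=
  (List.ofFn fun i => List.replicate (a i) i).flatten

/-- `f` belongs to the Sobolev–Mellin space `W^r`: all derivatives `Θ₁^{a₁}⋯Θₙ^{aₙ} f`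
with `|a| = r` exist. -/
def memW {E : Type*} [NormedAddCommGroup E] [NormedSpace ℂ E] {n : ℕ}
    (U : Fin n → ℝ → E →L[ℂ] E) (r : ℕ) (f : E) : Prop :=
  ∀ a : Fin n → ℕ, (∑ i, a i) = r → ∃ g, IsIterDeriv U (multiIndexList a) f g

/-- The value `Θ_{j₁}⋯Θ_{j_k} f` (or `0` if it does not exist). -/
def iterDerivVal {E : Type*} [NormedAddCommGroup E] [NormedSpace ℂ E] {n : ℕ}
    (U : Fin n → ℝ → E →L[ℂ] E) (L : List (Fin n)) (f : E) : E :=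
  haveI := Classical.propDecidable (∃ g, IsIterDeriv U L f g)
  if h : ∃ g, IsIterDeriv U L f g then h.choose else 0

/-- The Sobolev–Mellin norm `‖f‖ + Σ_{|a|=r} ‖Θ₁^{a₁}⋯Θₙ^{aₙ} f‖` (for `r = 0` it is `‖f‖`). -/
def WNorm {E : Type*} [NormedAddCommGroup E] [NormedSpace ℂ E] {n : ℕ}
    (U : Fin n → ℝ → E →L[ℂ] E) (r : ℕ) (f : E) : ℝ :=
  ‖f‖ + ∑ a ∈ (Fintype.piFinset fun _ : Fin n => Finset.range (r + 1)).filter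
      (fun a => (∑ i, a i) = r ∧ r ≠ 0),
    ‖iterDerivVal U (multiIndexList a) f‖

/-- Peetre's K-functional for the pair `(X^p, W^r_p)`. -/
def Kfun {E : Type*} [NormedAddCommGroup E] [NormedSpace ℂ E] {n : ℕ}
    (U : Fin n → ℝ → E →L[ℂ] E) (r : ℕ) (t : ℝ) (f : E) : ℝ :=
  sInf {v | ∃ f₀ f₁ : E, f = f₀ + f₁ ∧ memW U r f₁ ∧ v = ‖f₀‖ + t * WNorm U r f₁}

/-- The Besov–Mellin (quasi-)norm via the mixed modulus of continuity:
`‖f‖ + (∫₀^∞ (s^{-α} Ω^r_p(s,f))^q ds/s)^{1/q}`, valued in `ℝ≥0∞`. -/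
def besovOmega {E : Type*} [NormedAddCommGroup E] [NormedSpace ℂ E] {n : ℕ}
    (U : Fin n → ℝ → E →L[ℂ] E) (r : ℕ) (α q : ℝ) (f : E) : ℝ≥0∞ :=
  ENNReal.ofReal ‖f‖ +
    (∫⁻ s in Set.Ioi (0 : ℝ),
      ENNReal.ofReal ((s ^ (-α) * mixedMod U r s f) ^ q / s)) ^ (1 / q)

/-- The Besov–Mellin norm via the K-functional:
`‖f‖ + (∫₀^∞ (s^{-α} K(s^r, f, X^p, W^r_p))^q ds/s)^{1/q}`. -/
def besovK {E : Type*} [NormedAddCommGroup E] [NormedSpace ℂ E] {n : ℕ}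
    (U : Fin n → ℝ → E →L[ℂ] E) (r : ℕ) (α q : ℝ) (f : E) : ℝ≥0∞ :=
  ENNReal.ofReal ‖f‖ +
    (∫⁻ s in Set.Ioi (0 : ℝ),
      ENNReal.ofReal ((s ^ (-α) * Kfun U r (s ^ r) f) ^ q / s)) ^ (1 / q)

/-! ### Mellin translations in the exponential chart -/

/-- The exponential chart `ℝⁿ → (0,∞)ⁿ`, which turns dilations into translations. -/
def mExp (n : ℕ) (y : Fin n → ℝ) : Fin n → ℝ := fun i => Real.exp (y i)

lemma measurePreserving_mExp (n : ℕ) :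
    MeasurePreserving (mExp n) volume (mellinMeasure n) := by
  have hm : Measurable (mExp n) := by unfold mExp; fun_prop
  refine ⟨hm, ?_⟩
  ext A hA
  have himg : mExp n '' Set.univ = {x | ∀ i, 0 < x i} := by
    ext x
    constructor
    · rintro ⟨y, -, rfl⟩ i
      exact Real.exp_pos _
    · intro hx
      exact ⟨fun i => Real.log (x i), trivial, funext fun i => Real.exp_log (hx i)⟩
  -- The Jacobian determinant `∏ᵢ e^{yᵢ}` cancels the density of the Mellin measure.
  let D : (Fin n → ℝ) → (Fin n → ℝ) →L[ℝ] (Fin n → ℝ) := fun y =>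
    ContinuousLinearMap.pi fun i =>
      (Real.exp (y i) • ContinuousLinearMap.id ℝ ℝ).comp (ContinuousLinearMap.proj i)
  have hdet : ∀ y, (D y).det = ∏ i, Real.exp (y i) := fun y => by
    rw [ContinuousLinearMap.det_pi]
    simp
  have hD : ∀ y ∈ Set.univ, HasFDerivWithinAt (mExp n) (D y) Set.univ y := by
    intro y _
    rw [hasFDerivWithinAt_univ, hasFDerivAt_pi]
    intro i
    have := (Real.hasDerivAt_exp (y i)).hasFDerivAt.comp y
      (ContinuousLinearMap.proj (R := ℝ) (φ := fun _ : Fin n => ℝ) i).hasFDerivAt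
    refine this.congr_fderiv ?_
    ext v
    simp [mul_comm]
  have hinj : Set.InjOn (mExp n) Set.univ := fun x _ y _ h =>
    funext fun i => Real.exp_injective (congrFun h i)
  have hpos : MeasurableSet {x : Fin n → ℝ | ∀ i, 0 < x i} := by
    rw [Set.ofPred_forall]
    exact MeasurableSet.iInter fun i => measurableSet_lt measurable_const (measurable_pi_apply i)
  rw [Measure.map_apply hm hA, mellinMeasure, withDensity_apply _ hA,
    ← lintegral_indicator hA, ← himg,
    lintegral_image_eq_lintegral_abs_det_fderiv_mul volume MeasurableSet.univ hD hinj,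
    Measure.restrict_univ, ← lintegral_indicator_one (hm hA)]
  refine lintegral_congr fun y => ?_
  rw [hdet, abs_of_pos (Finset.prod_pos fun i _ => Real.exp_pos _)]
  by_cases hy : mExp n y ∈ A
  · rw [Set.indicator_of_mem hy, Set.indicator_of_mem (Set.mem_preimage.2 hy),
      ENNReal.ofReal_prod_of_nonneg fun i _ => (Real.exp_pos _).le, ← Finset.prod_mul_distrib]
    symm
    refine Finset.prod_eq_one fun i _ => ?_
    rw [← ENNReal.ofReal_mul (Real.exp_pos _).le]
    simp [mExp, Real.exp_ne_zero]
  · rw [Set.indicator_of_notMem hy, Set.indicator_of_notMem (mt Set.mem_preimage.1 hy), mul_zero]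

lemma mellinDilate_mExp {n : ℕ} (j : Fin n) (t : ℝ) (y : Fin n → ℝ) :
    mellinDilate j t (mExp n y) = mExp n (y + Pi.single j t) := by
  ext i
  rcases eq_or_ne i j with rfl | h
  · simp [mellinDilate, mExp, Real.exp_add, mul_comm]
  · simp [mellinDilate, mExp, h]

lemma measurePreserving_mellinDilate {n : ℕ} (j : Fin n) (t : ℝ) :
    MeasurePreserving (mellinDilate j t) (mellinMeasure n) (mellinMeasure n) := by
  have hm : Measurable (mellinDilate j t) := by
    refine measurable_pi_lambda _ fun i => ?_
    rcases eq_or_ne i j with rfl | h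
    · simp only [mellinDilate, Function.update_self]; fun_prop
    · simp only [mellinDilate, Function.update_of_ne h]; fun_prop
  refine ⟨hm, ?_⟩
  have he := measurePreserving_mExp n
  have ht := measurePreserving_add_right (volume : Measure (Fin n → ℝ)) (Pi.single j t)
  rw [← he.map_eq, Measure.map_map hm he.measurable]
  have : mellinDilate j t ∘ mExp n = mExp n ∘ (· + Pi.single j t) :=
    funext fun y => mellinDilate_mExp j t y
  rw [this, ← Measure.map_map he.measurable ht.measurable, ht.map_eq]

section Translation

variable {n : ℕ} {p : ℝ≥0∞} [Fact (1 ≤ p)]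
  {U : Fin n → ℝ → (Lp ℂ p (mellinMeasure n) →L[ℂ] Lp ℂ p (mellinMeasure n))}

lemma IsMellinTranslation.eq_comp (hU : IsMellinTranslation p U) (j : Fin n) (t : ℝ)
    (f : Lp ℂ p (mellinMeasure n)) :
    U j t f = Lp.compMeasurePreserving _ (measurePreserving_mellinDilate j t) f :=
  Lp.ext ((hU j t f).trans
    (Lp.coeFn_compMeasurePreserving f (measurePreserving_mellinDilate j t)).symm)

lemma IsMellinTranslation.norm_le (hU : IsMellinTranslation p U) (j : Fin n) (t : ℝ) :
    ‖U j t‖ ≤ 1 :=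
  ContinuousLinearMap.opNorm_le_bound _ zero_le_one fun f => by
    rw [hU.eq_comp, Lp.norm_compMeasurePreserving, one_mul]

lemma IsMellinTranslation.mul_apply_ae (hU : IsMellinTranslation p U) (j k : Fin n) (s t : ℝ)
    (f : Lp ℂ p (mellinMeasure n)) :
    U j s (U k t f) =ᵐ[mellinMeasure n]
      fun x => f (mellinDilate k t (mellinDilate j s x)) :=
  (hU j s _).trans ((measurePreserving_mellinDilate j s).quasiMeasurePreserving.ae (hU k t f))

lemma IsMellinTranslation.zero (hU : IsMellinTranslation p U) (j : Fin n) : U j 0 = 1 := by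
  ext1 f
  refine Lp.ext ((hU j 0 f).trans (.of_forall fun x => ?_))
  simp [mellinDilate]

lemma IsMellinTranslation.add (hU : IsMellinTranslation p U) (j : Fin n) (s t : ℝ) :
    U j (s + t) = U j s * U j t := by
  ext1 f
  refine Lp.ext ((hU j _ f).trans
    (.trans (.of_forall fun x => ?_) (hU.mul_apply_ae j j s t f).symm))
  simp [mellinDilate, Real.exp_add, mul_assoc, mul_comm]

lemma IsMellinTranslation.commute (hU : IsMellinTranslation p U) (j k : Fin n) (s t : ℝ) :
    U j s * U k t = U k t * U j s := by
  ext1 f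
  refine Lp.ext ((hU.mul_apply_ae j k s t f).trans
    (.trans (.of_forall fun x => ?_) (hU.mul_apply_ae k j t s f).symm))
  refine congrArg f (funext fun i => ?_)
  rcases eq_or_ne j k with rfl | h
  · simp [mellinDilate, mul_left_comm]
  · simp only [mellinDilate, Function.update_of_ne h, Function.update_of_ne h.symm,
      Function.update_comm h]

lemma IsMellinTranslation.continuous (hU : IsMellinTranslation p U) (hp : p ≠ ∞) (j : Fin n)
    (f : Lp ℂ p (mellinMeasure n)) : Continuous fun t => U j t f := by
  have he := measurePreserving_mExp n
  have hiso : Isometry (Lp.compMeasurePreserving (E := ℂ) (p := p) (mExp n) he) :=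
    Lp.isometry_compMeasurePreserving he
  let g : ℝ → C(Fin n → ℝ, Fin n → ℝ) := fun t => ⟨fun y => y + Pi.single j t, by fun_prop⟩
  have hg : Continuous g := by
    refine ContinuousMap.continuous_of_continuous_uncurry _ ?_
    change Continuous fun x : ℝ × (Fin n → ℝ) => x.2 + Pi.single j x.1
    exact continuous_snd.add ((continuous_single j).comp continuous_fst)
  have hgm : ∀ t, MeasurePreserving (g t) (volume : Measure (Fin n → ℝ)) volume := by
    intro t
    exact measurePreserving_add_right (volume : Measure (Fin n → ℝ)) (Pi.single j t)
  rw [hiso.isUniformInducing.isInducing.continuous_iff]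
  have : (Lp.compMeasurePreserving (E := ℂ) (p := p) (mExp n) he) ∘ (fun t => U j t f) =
      fun t => Lp.compMeasurePreserving (g t) (hgm t)
        (Lp.compMeasurePreserving (mExp n) he f) := by
    funext t
    rw [Function.comp_apply, hU.eq_comp, ← Lp.compMeasurePreserving_comp_apply,
      ← Lp.compMeasurePreserving_comp_apply]
    congr 2
    exact funext fun y => mellinDilate_mExp j t y
  rw [this]
  exact continuous_const.compMeasurePreservingLp hg hgm hp

end Translation

/-! ### Weighted integrals -/

/-- The weighted `L^q(ds/s)` seminorm `(∫₀^∞ (s^{-α} F(s))^q ds/s)^{1/q}` occurring in both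
Besov norms. -/
def besovSemi (α q : ℝ) (F : ℝ → ℝ) : ℝ≥0∞ :=
  (∫⁻ s in Set.Ioi (0 : ℝ), ENNReal.ofReal ((s ^ (-α) * F s) ^ q / s)) ^ (1 / q)

lemma rpow_add_le_two (x y q : ℝ) (hx : 0 ≤ x) (hy : 0 ≤ y) (hq : 0 ≤ q) :
    (x + y) ^ q ≤ 2 ^ q * (x ^ q + y ^ q) := by
  wlog h : x ≤ y generalizing x y
  · rw [add_comm x, add_comm (x ^ q)]
    exact this y x hy hx (le_of_not_ge h)
  calc (x + y) ^ q ≤ (2 * y) ^ q := Real.rpow_le_rpow (by positivity) (by linarith) hq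
    _ = 2 ^ q * y ^ q := Real.mul_rpow (by norm_num) hy
    _ ≤ _ := by
      gcongr
      linarith [Real.rpow_nonneg hx q]

/-- The weight `s^{-α} min(1, s^r)` has finite `L^q(ds/s)` norm because `0 < α < r`. -/
lemma lintegral_min_lt_top {r : ℕ} {α q : ℝ} (hq : 1 ≤ q) (hα : 0 < α) (hαr : α < (r : ℝ)) :
    ∫⁻ s in Set.Ioi (0 : ℝ), ENNReal.ofReal ((s ^ (-α) * min 1 (s ^ r)) ^ q / s) < ∞ := by
  have hq0 : 0 < q := by linarith
  rw [← Set.Ioc_union_Ioi_eq_Ioi (zero_le_one' ℝ)]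
  refine (lintegral_union_le _ _ _).trans_lt (ENNReal.add_lt_top.2 ⟨?_, ?_⟩)
  · have h1 : IntegrableOn (fun s : ℝ => s ^ ((r - α) * q - 1)) (Set.Ioc 0 1) := by
      have : 0 < (r - α) * q := mul_pos (by linarith) hq0
      exact (intervalIntegral.intervalIntegrable_rpow' (by linarith)).1
    refine lt_of_le_of_lt ?_ h1.lintegral_lt_top
    refine setLIntegral_mono' measurableSet_Ioc fun s hs => ENNReal.ofReal_le_ofReal ?_
    have hs0 : 0 < s := hs.1
    rw [Real.rpow_sub_one hs0.ne', Real.rpow_mul hs0.le]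
    gcongr
    calc s ^ (-α) * min 1 (s ^ r) ≤ s ^ (-α) * s ^ r := by gcongr; exact min_le_right _ _
      _ = s ^ ((r : ℝ) - α) := by
        rw [← Real.rpow_natCast, ← Real.rpow_add hs0]; ring_nf
  · have h1 : IntegrableOn (fun s : ℝ => s ^ (-α * q - 1)) (Set.Ioi 1) := by
      have : 0 < α * q := mul_pos hα hq0
      exact integrableOn_Ioi_rpow_of_lt (by linarith) one_pos
    refine lt_of_le_of_lt ?_ h1.lintegral_lt_top
    refine setLIntegral_mono' measurableSet_Ioi fun s hs => ENNReal.ofReal_le_ofReal ?_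
    have hs0 : 0 < s := one_pos.trans hs
    rw [Real.rpow_sub_one hs0.ne', Real.rpow_mul hs0.le]
    gcongr
    calc s ^ (-α) * min 1 (s ^ r) ≤ s ^ (-α) * 1 := by gcongr; exact min_le_left _ _
      _ = s ^ (-α) := mul_one _

/-- A pointwise bound `F ≤ A (G + b min(1, s^r))` passes to the weighted seminorms. Neither `F`
nor `G` has to be measurable: only the integral of the explicit last term is split off. -/
lemma besovSemi_le {r : ℕ} {α q A : ℝ} (hq : 1 ≤ q) (hα : 0 < α) (hαr : α < (r : ℝ))
    (hA : 0 ≤ A) :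
    ∃ C : ℝ, 0 ≤ C ∧ ∀ (F G : ℝ → ℝ) (b : ℝ), 0 ≤ b →
      (∀ s, 0 < s → 0 ≤ F s ∧ 0 ≤ G s ∧ F s ≤ A * (G s + b * min 1 (s ^ r))) →
      besovSemi α q F ≤ ENNReal.ofReal C * (besovSemi α q G + ENNReal.ofReal b) := by
  have hq0 : 0 < q := by linarith
  have hI := lintegral_min_lt_top hq hα hαr
  set I := ∫⁻ s in Set.Ioi (0 : ℝ), ENNReal.ofReal ((s ^ (-α) * min 1 (s ^ r)) ^ q / s)
  have hI' : I ^ (1 / q) ≠ ∞ := ENNReal.rpow_ne_top_of_nonneg (by positivity) hI.ne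
  set c := (I ^ (1 / q)).toReal
  have hc : I ^ (1 / q) = ENNReal.ofReal c := (ENNReal.ofReal_toReal hI').symm
  have hc0 : 0 ≤ c := ENNReal.toReal_nonneg
  refine ⟨2 * A * (1 + c), by positivity, fun F G b hb h => ?_⟩
  have hmeas : Measurable fun s : ℝ => ENNReal.ofReal (b ^ q) *
      ENNReal.ofReal ((s ^ (-α) * min 1 (s ^ r)) ^ q / s) := by fun_prop
  have key : ∫⁻ s in Set.Ioi (0 : ℝ), ENNReal.ofReal ((s ^ (-α) * F s) ^ q / s) ≤
      ENNReal.ofReal ((2 * A) ^ q) * ((∫⁻ s in Set.Ioi (0 : ℝ),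
        ENNReal.ofReal ((s ^ (-α) * G s) ^ q / s)) + ENNReal.ofReal (b ^ q) * I) := by
    rw [← lintegral_const_mul' _ _ ENNReal.ofReal_ne_top, ← lintegral_add_right _ hmeas,
      ← lintegral_const_mul' _ _ ENNReal.ofReal_ne_top]
    refine setLIntegral_mono' measurableSet_Ioi fun s hs => ?_
    have hs0 : 0 < s := hs
    obtain ⟨hF, hG, hFG⟩ := h s hs0
    have hw : 0 ≤ s ^ (-α) := Real.rpow_nonneg hs0.le _
    have hmin : 0 ≤ min 1 (s ^ r) := le_min zero_le_one (by positivity)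
    rw [← ENNReal.ofReal_mul (by positivity), ← ENNReal.ofReal_add (by positivity)
      (by positivity), ← ENNReal.ofReal_mul (by positivity)]
    refine ENNReal.ofReal_le_ofReal ?_
    rw [← mul_div_assoc, ← add_div, ← mul_div_assoc]
    gcongr
    calc (s ^ (-α) * F s) ^ q
        ≤ (A * (s ^ (-α) * G s + b * (s ^ (-α) * min 1 (s ^ r)))) ^ q := by
          refine Real.rpow_le_rpow (by positivity) ?_ hq0.le
          calc s ^ (-α) * F s ≤ s ^ (-α) * (A * (G s + b * min 1 (s ^ r))) := by gcongr
            _ = _ := by ring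
      _ = A ^ q * (s ^ (-α) * G s + b * (s ^ (-α) * min 1 (s ^ r))) ^ q :=
          Real.mul_rpow hA (by positivity)
      _ ≤ A ^ q * (2 ^ q * ((s ^ (-α) * G s) ^ q +
            (b * (s ^ (-α) * min 1 (s ^ r))) ^ q)) := by
          gcongr
          exact rpow_add_le_two _ _ _ (by positivity) (by positivity) hq0.le
      _ = _ := by
          rw [Real.mul_rpow hb (by positivity), Real.mul_rpow (by norm_num) hA]
          ring
  have hroot : ∀ x : ℝ, 0 ≤ x → ENNReal.ofReal (x ^ q) ^ (1 / q) = ENNReal.ofReal x := by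
    intro x hx
    rw [ENNReal.ofReal_rpow_of_nonneg (by positivity) (by positivity), ← Real.rpow_mul hx,
      mul_one_div_cancel hq0.ne', Real.rpow_one]
  have h1q : 0 ≤ 1 / q := by positivity
  calc besovSemi α q F
      ≤ (ENNReal.ofReal ((2 * A) ^ q) * ((∫⁻ s in Set.Ioi (0 : ℝ),
        ENNReal.ofReal ((s ^ (-α) * G s) ^ q / s)) + ENNReal.ofReal (b ^ q) * I)) ^ (1 / q) :=
        ENNReal.rpow_le_rpow key h1q
    _ ≤ ENNReal.ofReal (2 * A) *
        (besovSemi α q G + ENNReal.ofReal b * ENNReal.ofReal c) := by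
        rw [ENNReal.mul_rpow_of_nonneg _ _ h1q, hroot _ (by positivity)]
        gcongr
        refine (ENNReal.rpow_add_le_add_rpow _ _ h1q
          ((div_le_one hq0).2 hq)).trans_eq ?_
        rw [ENNReal.mul_rpow_of_nonneg _ _ h1q, hroot _ hb, hc]
        rfl
    _ ≤ ENNReal.ofReal (2 * A) * (ENNReal.ofReal (1 + c) *
        (besovSemi α q G + ENNReal.ofReal b)) := by
        gcongr
        rw [mul_add]
        refine add_le_add ?_ ?_
        · refine le_mul_of_one_le_left' ?_
          rw [← ENNReal.ofReal_one]
          exact ENNReal.ofReal_le_ofReal (by linarith)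
        · rw [mul_comm]
          gcongr
          linarith
    _ = _ := by rw [← mul_assoc, ← ENNReal.ofReal_mul (by positivity)]

/-! ### Commuting groups, generators and averages -/

/-- A commuting family of strongly continuous one-parameter groups of contractions (hence of
isometries). -/
structure IsCommGroups {E : Type*} [NormedAddCommGroup E] [NormedSpace ℂ E] {n : ℕ}
    (U : Fin n → ℝ → E →L[ℂ] E) : Prop where
  norm_le : ∀ j t, ‖U j t‖ ≤ 1
  zero : ∀ j, U j 0 = 1
  add : ∀ j s t, U j (s + t) = U j s * U j t
  comm : ∀ j k s t, U j s * U k t = U k t * U j s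
  cont : ∀ j f, Continuous fun t => U j t f

section Abstract

variable {E : Type*} [NormedAddCommGroup E] [NormedSpace ℂ E] {n : ℕ}
  {U : Fin n → ℝ → E →L[ℂ] E}

lemma GenDeriv.map {T : ℝ → E →L[ℂ] E} {f g : E} (h : GenDeriv T f g) (B : E →L[ℂ] E)
    (hB : ∀ t, B * T t = T t * B) : GenDeriv T (B f) (B g) := by
  refine ((B.continuous.tendsto g).comp h).congr fun t => ?_
  have : B (T t f) = T t (B f) := congrArg (· f) (hB t)
  rw [Function.comp_apply, ContinuousLinearMap.map_smul_of_tower, map_sub, this]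

lemma GenDeriv.const_smul {T : ℝ → E →L[ℂ] E} {f g : E} (h : GenDeriv T f g) (c : ℝ) :
    GenDeriv T (c • f) (c • g) := by
  refine (Filter.Tendsto.const_smul h c).congr fun t => ?_
  rw [ContinuousLinearMap.map_smul_of_tower, ← smul_sub, smul_comm]

lemma GenDeriv.unique {T : ℝ → E →L[ℂ] E} {f g g' : E} (h : GenDeriv T f g)
    (h' : GenDeriv T f g') : g = g' :=
  tendsto_nhds_unique h h'

lemma IsIterDeriv.unique {L : List (Fin n)} {f g g' : E} (h : IsIterDeriv U L f g)
    (h' : IsIterDeriv U L f g') : g = g' := by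
  induction L generalizing g g' with
  | nil => exact h.trans h'.symm
  | cons j L ih =>
    obtain ⟨k, hk, hg⟩ := h
    obtain ⟨k', hk', hg'⟩ := h'
    obtain rfl := ih hk hk'
    exact hg.unique hg'

lemma iterDerivVal_eq {L : List (Fin n)} {f g : E} (h : IsIterDeriv U L f g) :
    iterDerivVal U L f = g := by
  have hex : ∃ g, IsIterDeriv U L f g := ⟨g, h⟩
  unfold iterDerivVal
  rw [dif_pos hex]
  exact hex.choose_spec.unique h

lemma isIterDeriv_zero (L : List (Fin n)) : IsIterDeriv U L (0 : E) 0 := by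
  induction L with
  | nil => rfl
  | cons j L ih => exact ⟨0, ih, by simp [GenDeriv]⟩

lemma IsCommGroups.hasDerivAt (hU : IsCommGroups U) {j : Fin n} {f g : E}
    (h : GenDeriv (U j) f g) (t : ℝ) : HasDerivAt (fun t => U j t f) (U j t g) t := by
  rw [hasDerivAt_iff_tendsto_slope_zero]
  refine (((U j t).continuous.tendsto g).comp h).congr fun ε => ?_
  rw [Function.comp_apply, ContinuousLinearMap.map_smul_of_tower, map_sub, hU.add]
  rfl

/-- The mean value inequality `‖(U_j(τ) - I) f‖ ≤ τ ‖Θ_j f‖`. -/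
lemma IsCommGroups.norm_apply_sub_le (hU : IsCommGroups U) {j : Fin n} {f g : E}
    (h : GenDeriv (U j) f g) {τ : ℝ} (hτ : 0 ≤ τ) : ‖(U j τ - 1) f‖ ≤ τ * ‖g‖ := by
  have := norm_image_sub_le_of_norm_deriv_le_segment' (a := 0) (b := τ) (C := ‖g‖)
    (fun t _ => (hU.hasDerivAt h t).hasDerivWithinAt)
    (fun t _ => (U j t).le_of_opNorm_le (hU.norm_le j t) g |>.trans_eq (one_mul _))
    τ ⟨hτ, le_rfl⟩
  rw [hU.zero, sub_zero, mul_comm] at this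
  exact this

/-- The average `s⁻¹ ∫₀ˢ U_j(τ) dτ` exists as a bounded operator. -/
lemma IsCommGroups.exists_avg (hU : IsCommGroups U) (j : Fin n) {s : ℝ} (hs : 0 < s) :
    ∃ M : E →L[ℂ] E, ‖M‖ ≤ 1 ∧ ∀ f, M f = s⁻¹ • ∫ τ in (0 : ℝ)..s, U j τ f := by
  have hInt : ∀ f, IntervalIntegrable (fun τ => U j τ f) volume 0 s := fun f =>
    (hU.cont j f).intervalIntegrable _ _
  let L : E →ₗ[ℂ] E :=
    { toFun := fun f => s⁻¹ • ∫ τ in (0 : ℝ)..s, U j τ f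
      map_add' := fun f g => by
        simp only [map_add]
        rw [intervalIntegral.integral_add (hInt f) (hInt g), smul_add]
      map_smul' := fun c f => by
        simp only [map_smul, RingHom.id_apply]
        rw [intervalIntegral.integral_smul, smul_comm] }
  have hL : ∀ f, ‖L f‖ ≤ 1 * ‖f‖ := fun f => by
    have h1 : ‖∫ τ in (0 : ℝ)..s, U j τ f‖ ≤ ‖f‖ * |s - 0| :=
      intervalIntegral.norm_integral_le_of_norm_le_const fun τ _ =>
        ((U j τ).le_of_opNorm_le (hU.norm_le j τ) f).trans_eq (one_mul _)
    rw [sub_zero, abs_of_pos hs] at h1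
    change ‖s⁻¹ • ∫ τ in (0 : ℝ)..s, U j τ f‖ ≤ _
    rw [norm_smul, Real.norm_of_nonneg (inv_nonneg.2 hs.le), inv_mul_le_iff₀ hs]
    linarith
  exact ⟨L.mkContinuous 1 hL, L.mkContinuous_norm_le zero_le_one hL, fun f => rfl⟩

variable [CompleteSpace E]

lemma IsCommGroups.avg_comm (hU : IsCommGroups U) {j : Fin n} {s : ℝ} {M : E →L[ℂ] E}
    (hM : ∀ f, M f = s⁻¹ • ∫ τ in (0 : ℝ)..s, U j τ f) (B : E →L[ℂ] E)
    (hB : ∀ t, B * U j t = U j t * B) : B * M = M * B := by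
  ext f
  change B (M f) = M (B f)
  rw [hM, hM, ContinuousLinearMap.map_smul_of_tower,
    ← B.intervalIntegral_comp_comm ((hU.cont j f).intervalIntegrable _ _)]
  congr 1
  exact intervalIntegral.integral_congr fun t _ => congrArg (· f) (hB t)

lemma IsCommGroups.avg_genDeriv (hU : IsCommGroups U) {j : Fin n} {s : ℝ} {M : E →L[ℂ] E}
    (hM : ∀ f, M f = s⁻¹ • ∫ τ in (0 : ℝ)..s, U j τ f) (f : E) :
    GenDeriv (U j) (M f) (s⁻¹ • (U j s - 1) f) := by
  have hc := hU.cont j f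
  have hInt : ∀ a b, IntervalIntegrable (fun τ => U j τ f) volume a b := fun a b =>
    hc.intervalIntegrable _ _
  have hshift : ∀ t, U j t (∫ τ in (0 : ℝ)..s, U j τ f) =
      (∫ τ in (0 : ℝ)..(s + t), U j τ f) - ∫ τ in (0 : ℝ)..t, U j τ f := by
    intro t
    rw [intervalIntegral.integral_interval_sub_left (hInt _ _) (hInt _ _),
      ← (U j t).intervalIntegral_comp_comm (hInt _ _)]
    have : ∀ τ, U j t (U j τ f) = U j (τ + t) f := fun τ => by
      rw [add_comm, hU.add]; rfl
    simp only [this]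
    rw [intervalIntegral.integral_comp_add_right (fun τ => U j τ f), zero_add]
  have hF : ∀ a, HasDerivAt (fun b => ∫ τ in (0 : ℝ)..b, U j τ f) (U j a f) a := fun a =>
    intervalIntegral.integral_hasDerivAt_right (hInt _ _)
      (hc.stronglyMeasurableAtFilter _ _) hc.continuousAt
  have hd : HasDerivAt (fun t => U j t (∫ τ in (0 : ℝ)..s, U j τ f)) ((U j s - 1) f) 0 := by
    have h1 : HasDerivAt (fun t => ∫ τ in (0 : ℝ)..(s + t), U j τ f) (U j s f) 0 := by
      have := hF (s + 0)
      rw [add_zero] at this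
      exact HasDerivAt.comp_const_add s 0 (by rwa [add_zero])
    have h2 := h1.sub (hF 0)
    rw [hU.zero] at h2
    exact h2.congr_of_eventuallyEq (.of_forall hshift)
  have hG : GenDeriv (U j) (∫ τ in (0 : ℝ)..s, U j τ f) ((U j s - 1) f) := by
    rw [hasDerivAt_iff_tendsto_slope_zero] at hd
    refine hd.congr fun t => ?_
    rw [zero_add, hU.zero]
    rfl
  rw [hM]
  exact hG.const_smul _

/-- A bound for all differences `B (U_j(τ) - I) f` with `0 ≤ τ ≤ s` carries over to their
average. -/
lemma IsCommGroups.avg_norm_le (hU : IsCommGroups U) {j : Fin n} {s : ℝ} (hs : 0 < s)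
    {M : E →L[ℂ] E} (hM : ∀ f, M f = s⁻¹ • ∫ τ in (0 : ℝ)..s, U j τ f) (B : E →L[ℂ] E)
    (f : E) {c : ℝ} (h : ∀ τ ∈ Set.Icc 0 s, ‖B ((U j τ - 1) f)‖ ≤ c) :
    ‖B ((M - 1) f)‖ ≤ c := by
  have hc : Continuous fun τ => (U j τ - 1) f := (hU.cont j f).sub continuous_const
  have h1 : (M - 1) f = s⁻¹ • ∫ τ in (0 : ℝ)..s, (U j τ - 1) f := by
    change M f - f = s⁻¹ • ∫ τ in (0 : ℝ)..s, (U j τ f - f)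
    rw [intervalIntegral.integral_sub ((hU.cont j f).intervalIntegrable _ _)
      (continuous_const.intervalIntegrable _ _), intervalIntegral.integral_const, sub_zero,
      smul_sub, inv_smul_smul₀ hs.ne', hM]
  rw [h1, ContinuousLinearMap.map_smul_of_tower,
    ← B.intervalIntegral_comp_comm (hc.intervalIntegrable _ _),
    norm_smul, Real.norm_of_nonneg (inv_nonneg.2 hs.le), inv_mul_le_iff₀ hs]
  have := intervalIntegral.norm_integral_le_of_norm_le_const (a := 0) (b := s) (C := c)
    (f := fun τ => B ((U j τ - 1) f)) fun τ hτ => by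
      rw [Set.uIoc_of_le hs.le] at hτ
      exact h τ ⟨hτ.1.le, hτ.2⟩
  rw [sub_zero, abs_of_pos hs] at this
  linarith

end Abstract

/-! ### The modulus of continuity is dominated by the K-functional -/

section Algebra

variable {E : Type*} [NormedAddCommGroup E] [NormedSpace ℂ E] {n : ℕ}
  {U : Fin n → ℝ → E →L[ℂ] E} {A : Type*} [CommRing A] {φ : A →+* (E →L[ℂ] E)}
  {u : Fin n → ℝ → A}

lemma map_mul_apply (φ : A →+* (E →L[ℂ] E)) (a b : A) (f : E) : φ (a * b) f = φ a (φ b f) := by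
  rw [map_mul]; rfl

lemma norm_map_mul_le (φ : A →+* (E →L[ℂ] E)) (a b : A) : ‖φ (a * b)‖ ≤ ‖φ a‖ * ‖φ b‖ := by
  rw [map_mul]; exact norm_mul_le _ _

lemma norm_map_one_le (φ : A →+* (E →L[ℂ] E)) : ‖φ 1‖ ≤ 1 := by
  rw [map_one]; exact ContinuousLinearMap.norm_id_le

lemma norm_map_prod_le {ι : Type*} (φ : A →+* (E →L[ℂ] E)) (S : Finset ι) (x : ι → A) {c : ℝ}
    (hx : ∀ i, ‖φ (x i)‖ ≤ c) : ‖φ (∏ i ∈ S, x i)‖ ≤ c ^ S.card := by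
  classical
  induction S using Finset.induction_on with
  | empty => simpa using norm_map_one_le φ
  | insert a S ha ih =>
    rw [Finset.prod_insert ha, Finset.card_insert_of_notMem ha, pow_succ']
    exact (norm_map_mul_le φ _ _).trans
      (mul_le_mul (hx a) ih (norm_nonneg _) ((norm_nonneg _).trans (hx a)))

lemma norm_map_pow_le (φ : A →+* (E →L[ℂ] E)) (x : A) (k : ℕ) {c : ℝ}
    (hx : ‖φ x‖ ≤ c) : ‖φ (x ^ k)‖ ≤ c ^ k := by
  have := norm_map_prod_le φ (Finset.range k) (fun _ => x) fun _ => hx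
  simpa using this

lemma norm_map_sum_le {ι : Type*} (φ : A →+* (E →L[ℂ] E)) (S : Finset ι) (x : ι → A) {c : ℝ}
    (hx : ∀ i ∈ S, ‖φ (x i)‖ ≤ c) : ‖φ (∑ i ∈ S, x i)‖ ≤ S.card * c := by
  rw [map_sum]
  exact (norm_sum_le_of_le S hx).trans_eq (by simp)

lemma ofFn_prod_eq (hu : ∀ j t, φ (u j t) = U j t) {r : ℕ} (J : Fin r → Fin n)
    (τ : Fin r → ℝ) :
    (List.ofFn fun i => U (J i) (τ i) - 1).prod = φ (∏ i, (u (J i) (τ i) - 1)) := by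
  rw [← List.prod_ofFn, map_list_prod, List.map_ofFn]
  congr 2
  funext i
  simp [hu]

lemma IsCommGroups.norm_map_sub_one_le (hU : IsCommGroups U) (hu : ∀ j t, φ (u j t) = U j t)
    (j : Fin n) (t : ℝ) : ‖φ (u j t - 1)‖ ≤ 2 := by
  rw [map_sub, hu]
  have := norm_sub_le (U j t) (φ 1)
  linarith [hU.norm_le j t, norm_map_one_le φ]

lemma IsCommGroups.norm_map_diff_le (hU : IsCommGroups U) (hu : ∀ j t, φ (u j t) = U j t)
    {r : ℕ} (J : Fin r → Fin n) (τ : Fin r → ℝ) (f : E) :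
    ‖φ (∏ i, (u (J i) (τ i) - 1)) f‖ ≤ 2 ^ r * ‖f‖ := by
  refine ContinuousLinearMap.le_of_opNorm_le _ ?_ f
  simpa using norm_map_prod_le φ Finset.univ (fun i => u (J i) (τ i) - 1)
    fun i => hU.norm_map_sub_one_le hu _ _

lemma mixedMod_le (hu : ∀ j t, φ (u j t) = U j t) {r : ℕ} {s c : ℝ} (hs : 0 ≤ s) (f : E)
    (h : ∀ (J : Fin r → Fin n) (τ : Fin r → ℝ), (∀ i, τ i ∈ Set.Icc 0 s) →
      ‖φ (∏ i, (u (J i) (τ i) - 1)) f‖ ≤ c) :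
    mixedMod U r s f ≤ (n : ℝ) ^ r * c := by
  unfold mixedMod
  refine (Finset.sum_le_card_nsmul _ _ c fun J _ => ?_).trans_eq (by simp)
  refine csSup_le ⟨_, fun _ => 0, fun i _ => ⟨le_rfl, hs⟩, rfl⟩ ?_
  · rintro _ ⟨τ, hτ, rfl⟩
    simp only
    rw [ofFn_prod_eq hu]
    exact h J τ fun i => hτ i trivial

lemma mixedMod_term_nonneg {r : ℕ} (s : ℝ) (f : E) (J : Fin r → Fin n) :
    0 ≤ sSup ((fun τ : Fin r → ℝ => ‖((List.ofFn fun i => U (J i) (τ i) - 1).prod) f‖) ''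
      Set.univ.pi fun _ => Set.Icc 0 s) :=
  Real.sSup_nonneg (by rintro _ ⟨τ, -, rfl⟩; exact norm_nonneg _)

lemma mixedMod_nonneg (r : ℕ) (s : ℝ) (f : E) : 0 ≤ mixedMod U r s f :=
  Finset.sum_nonneg fun J _ => mixedMod_term_nonneg s f J

lemma IsCommGroups.le_mixedMod_term (hU : IsCommGroups U) (hu : ∀ j t, φ (u j t) = U j t)
    {r : ℕ} {s : ℝ} (f : E) (J : Fin r → Fin n) (τ : Fin r → ℝ) (hτ : ∀ i, τ i ∈ Set.Icc 0 s) :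
    ‖φ (∏ i, (u (J i) (τ i) - 1)) f‖ ≤
      sSup ((fun τ : Fin r → ℝ => ‖((List.ofFn fun i => U (J i) (τ i) - 1).prod) f‖) ''
        Set.univ.pi fun _ => Set.Icc 0 s) := by
  refine le_csSup ⟨2 ^ r * ‖f‖, ?_⟩ ⟨τ, fun i _ => hτ i, ?_⟩
  · rintro _ ⟨τ, -, rfl⟩
    simp only
    rw [ofFn_prod_eq hu]
    exact hU.norm_map_diff_le hu J τ f
  · simp only
    rw [ofFn_prod_eq hu]

/-- Differences are dominated by derivatives:
`‖B ∏ᵢ (U_{jᵢ}(τᵢ) - I) f‖ ≤ s^k ‖B Θ_{j₁}⋯Θ_{j_k} f‖` if `0 ≤ τᵢ ≤ s`. The commuting factor `B`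
makes the induction on the number of factors work. -/
lemma IsCommGroups.norm_list_diff_le (hU : IsCommGroups U) (hu : ∀ j t, φ (u j t) = U j t)
    {s : ℝ} (hs : 0 ≤ s) (l : List (Fin n × ℝ)) (hl : ∀ x ∈ l, x.2 ∈ Set.Icc 0 s) {f g : E}
    (h : IsIterDeriv U (l.map Prod.fst) f g) (B : A) :
    ‖φ (B * (l.map fun x => u x.1 x.2 - 1).prod) f‖ ≤ s ^ l.length * ‖φ B g‖ := by
  induction l generalizing g B with
  | nil =>
    obtain rfl : g = f := h
    simp
  | cons x l ih =>
    obtain ⟨k, hk, hg⟩ := h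
    have hx := hl x List.mem_cons_self
    have h1 := ih (fun y hy => hl y (List.mem_cons_of_mem _ hy)) hk (B * (u x.1 x.2 - 1))
    have h2 : ‖φ (B * (u x.1 x.2 - 1)) k‖ ≤ s * ‖φ B g‖ := by
      have hB : GenDeriv (U x.1) (φ B k) (φ B g) := hg.map _ fun t => by
        rw [← hu, ← map_mul, ← map_mul, mul_comm]
      rw [mul_comm B, map_mul_apply, map_sub, map_one, hu]
      exact (hU.norm_apply_sub_le hB hx.1).trans (by gcongr; exact hx.2)
    rw [List.map_cons, List.prod_cons, ← mul_assoc, List.length_cons, pow_succ,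
      mul_assoc (s ^ l.length)]
    exact h1.trans (by gcongr)

lemma count_multiIndexList (a : Fin n → ℕ) (k : Fin n) :
    (multiIndexList a).count k = a k := by
  unfold multiIndexList
  rw [List.count_flatten, List.map_ofFn, List.sum_ofFn]
  simp [List.count_replicate]

lemma length_multiIndexList (a : Fin n → ℕ) : (multiIndexList a).length = ∑ i, a i := by
  unfold multiIndexList
  rw [List.length_flatten, List.map_ofFn, List.sum_ofFn]
  simp

lemma exists_multiIndexList_perm (L : List (Fin n)) :
    ∃ a : Fin n → ℕ, ∑ i, a i = L.length ∧ (multiIndexList a).Perm L := by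
  have h : (multiIndexList fun k => L.count k).Perm L :=
    List.perm_iff_count.2 fun k => count_multiIndexList _ k
  exact ⟨_, by rw [← length_multiIndexList, h.length_eq], h⟩

lemma WNorm_nonneg (r : ℕ) (f : E) : 0 ≤ WNorm U r f :=
  add_nonneg (norm_nonneg _) (Finset.sum_nonneg fun _ _ => norm_nonneg _)

lemma le_WNorm {r : ℕ} (hr : r ≠ 0) {a : Fin n → ℕ} (ha : ∑ i, a i = r) {f g : E}
    (h : IsIterDeriv U (multiIndexList a) f g) : ‖g‖ ≤ WNorm U r f := by
  have hmem : a ∈ (Fintype.piFinset fun _ : Fin n => Finset.range (r + 1)).filter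
      (fun a => (∑ i, a i) = r ∧ r ≠ 0) := by
    refine Finset.mem_filter.2 ⟨Fintype.mem_piFinset.2 fun i => Finset.mem_range.2 ?_, ha, hr⟩
    have := Finset.single_le_sum (f := a) (fun _ _ => Nat.zero_le _) (Finset.mem_univ i)
    omega
  have := Finset.single_le_sum (f := fun a => ‖iterDerivVal U (multiIndexList a) f‖)
    (fun _ _ => norm_nonneg _) hmem
  simp only [iterDerivVal_eq h] at this
  exact this.trans (le_add_of_nonneg_left (norm_nonneg _))

/-- On `W^r` the mixed differences are `O(s^r)`. The factors are first reordered so that the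
directions occur in the order used by the multi-index derivatives. -/
lemma IsCommGroups.norm_diff_le_WNorm (hU : IsCommGroups U) (hu : ∀ j t, φ (u j t) = U j t)
    {r : ℕ} (hr : r ≠ 0) {s : ℝ} (hs : 0 ≤ s) {f : E} (hf : memW U r f) (J : Fin r → Fin n)
    (τ : Fin r → ℝ) (hτ : ∀ i, τ i ∈ Set.Icc 0 s) :
    ‖φ (∏ i, (u (J i) (τ i) - 1)) f‖ ≤ s ^ r * WNorm U r f := by
  set l : List (Fin n × ℝ) := List.ofFn fun i => (J i, τ i) with hl
  obtain ⟨a, ha, hperm⟩ := exists_multiIndexList_perm (l.map Prod.fst)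
  have hlen : l.length = r := by simp [hl]
  rw [List.length_map, hlen] at ha
  obtain ⟨l', hl', hll'⟩ : ∃ l' : List (Fin n × ℝ),
      multiIndexList a = l'.map Prod.fst ∧ l'.Perm l := by
    have := congrFun (congrFun (List.eq_map_comp_perm (Prod.fst : Fin n × ℝ → Fin n))
      (multiIndexList a)) l
    exact this.mpr hperm
  obtain ⟨g, hg⟩ := hf a ha
  have h1 := hU.norm_list_diff_le hu hs l' (f := f) (g := g)
    (fun x hx => by
      obtain ⟨i, rfl⟩ := List.mem_ofFn.1 (hll'.mem_iff.1 hx)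
      exact hτ i) (hl' ▸ hg) 1
  rw [one_mul, (hll'.map _).prod_eq, hll'.length_eq, hlen, hl, List.map_ofFn, List.prod_ofFn,
    map_one] at h1
  exact h1.trans (mul_le_mul_of_nonneg_left (le_WNorm hr ha hg) (by positivity))

lemma Kfun_nonneg {r : ℕ} {t : ℝ} (ht : 0 ≤ t) (f : E) : 0 ≤ Kfun U r t f := by
  refine Real.sInf_nonneg ?_
  rintro _ ⟨f₀, f₁, -, -, rfl⟩
  exact add_nonneg (norm_nonneg _) (mul_nonneg ht (WNorm_nonneg _ _))

lemma Kfun_le {r : ℕ} {t : ℝ} (ht : 0 ≤ t) (f f₁ : E) (h : memW U r f₁) :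
    Kfun U r t f ≤ ‖f - f₁‖ + t * WNorm U r f₁ := by
  refine csInf_le ⟨0, ?_⟩ ⟨f - f₁, f₁, by simp, h, rfl⟩
  rintro _ ⟨f₀, f₁, -, -, rfl⟩
  exact add_nonneg (norm_nonneg _) (mul_nonneg ht (WNorm_nonneg _ _))

lemma memW_zero (r : ℕ) : memW U r (0 : E) := fun _ _ => ⟨0, isIterDeriv_zero _⟩

lemma WNorm_zero (r : ℕ) : WNorm U r (0 : E) = 0 := by
  simp [WNorm, iterDerivVal_eq (isIterDeriv_zero _)]

lemma Kfun_le_norm {r : ℕ} {t : ℝ} (ht : 0 ≤ t) (f : E) : Kfun U r t f ≤ ‖f‖ := by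
  simpa [WNorm_zero] using Kfun_le ht f 0 (memW_zero (U := U) r)

/-- The modulus of continuity is dominated by the K-functional. -/
lemma IsCommGroups.mixedMod_le_Kfun (hU : IsCommGroups U) (hu : ∀ j t, φ (u j t) = U j t)
    {r : ℕ} (hr : r ≠ 0) {s : ℝ} (hs : 0 ≤ s) (f : E) :
    mixedMod U r s f ≤ ((n : ℝ) ^ r * 2 ^ r + 1) * Kfun U r (s ^ r) f := by
  rw [← div_le_iff₀' (by positivity)]
  refine le_csInf ⟨_, f, 0, by simp, memW_zero r, rfl⟩ ?_
  rintro _ ⟨f₀, f₁, rfl, hf₁, rfl⟩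
  rw [div_le_iff₀' (by positivity)]
  have hW : 0 ≤ s ^ r * WNorm U r f₁ := mul_nonneg (by positivity) (WNorm_nonneg _ _)
  have h2 : (1 : ℝ) ≤ 2 ^ r := one_le_pow₀ (by norm_num)
  refine (mixedMod_le hu hs (f₀ + f₁) (c := 2 ^ r * (‖f₀‖ + s ^ r * WNorm U r f₁))
    fun J τ hτ => ?_).trans ?_
  · rw [map_add]
    refine (norm_add_le _ _).trans ?_
    rw [mul_add]
    exact add_le_add (hU.norm_map_diff_le hu J τ f₀)
      ((hU.norm_diff_le_WNorm hu hr hs hf₁ J τ hτ).trans (le_mul_of_one_le_left hW h2))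
  · rw [← mul_assoc]
    gcongr
    linarith

end Algebra

/-! ### The K-functional is dominated by the modulus of continuity -/

section Approximation

variable {E : Type*} [NormedAddCommGroup E] [NormedSpace ℂ E] {n : ℕ}
  {U : Fin n → ℝ → E →L[ℂ] E} {A : Type*} [CommRing A] {φ : A →+* (E →L[ℂ] E)}
  {u : Fin n → ℝ → A}

lemma norm_map_apply_le (φ : A →+* (E →L[ℂ] E)) (a b : A) (f : E) :
    ‖φ (a * b) f‖ ≤ ‖φ a‖ * ‖φ b f‖ := by
  rw [map_mul_apply]; exact ContinuousLinearMap.le_opNorm _ _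

lemma norm_map_one_sub_le {x : A} (hx : ‖φ x‖ ≤ 1) : ‖φ (1 - x)‖ ≤ 2 := by
  rw [map_sub]
  linarith [norm_sub_le (φ 1) (φ x), norm_map_one_le φ]

/-- Products of averages factor out of powers of the full average. -/
lemma exists_pow_prod_eq {m : Fin n → A} (hm : ∀ j, ‖φ (m j)‖ ≤ 1) (L : List (Fin n)) :
    ∃ N : A, ‖φ N‖ ≤ 1 ∧ (∏ j, m j) ^ L.length = (L.map m).prod * N := by
  induction L with
  | nil => exact ⟨1, norm_map_one_le φ, by simp⟩
  | cons j L ih =>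
    obtain ⟨N, hN, h⟩ := ih
    refine ⟨(∏ i ∈ Finset.univ.erase j, m i) * N, ?_, ?_⟩
    · refine (norm_map_mul_le φ _ _).trans (mul_le_one₀ ?_ (norm_nonneg _) hN)
      simpa using norm_map_prod_le φ (Finset.univ.erase j) m hm
    · rw [List.length_cons, pow_succ, h, ← Finset.mul_prod_erase _ m (Finset.mem_univ j),
        List.map_cons, List.prod_cons]
      ring

lemma IsCommGroups.norm_list_le_mixedMod (hU : IsCommGroups U) (hu : ∀ j t, φ (u j t) = U j t)
    {s : ℝ} (hs : 0 ≤ s) (L : List (Fin n)) (f : E) :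
    ‖φ (L.map fun j => u j s - 1).prod f‖ ≤ mixedMod U L.length s f := by
  have h1 := hU.le_mixedMod_term hu f (fun i : Fin L.length => L[i]) (fun _ => s)
    fun _ => ⟨hs, le_rfl⟩
  have h2 : ∏ i : Fin L.length, (u L[i] s - 1) = (L.map fun j => u j s - 1).prod :=
    Fin.prod_univ_fun_getElem L fun j => u j s - 1
  rw [h2] at h1
  exact h1.trans (Finset.single_le_sum (fun J _ => mixedMod_term_nonneg s f J) (Finset.mem_univ _))

variable [CompleteSpace E]

/-- Replacing each difference `U_{jᵢ}(τᵢ) - I` by `M_{jᵢ} - I`, where `M_j` is the average of `U_j`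
over `[0,s]`, does not increase a uniform bound. The commuting factor `B` makes the induction on the
number of factors work. -/
lemma IsCommGroups.norm_prod_avg_le (hU : IsCommGroups U) (hu : ∀ j t, φ (u j t) = U j t)
    {s : ℝ} (hs : 0 < s) {m : Fin n → A}
    (hM : ∀ j f, φ (m j) f = s⁻¹ • ∫ τ in (0 : ℝ)..s, U j τ f) {r : ℕ} (J : Fin r → Fin n)
    (B : A) (f : E) {c : ℝ}
    (h : ∀ τ : Fin r → ℝ, (∀ i, τ i ∈ Set.Icc 0 s) →
      ‖φ (B * ∏ i, (u (J i) (τ i) - 1)) f‖ ≤ c) :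
    ‖φ (B * ∏ i, (m (J i) - 1)) f‖ ≤ c := by
  induction r generalizing B with
  | zero => simpa using h 0 (fun i => i.elim0)
  | succ r ih =>
    rw [Fin.prod_univ_succ, mul_left_comm, mul_comm, map_mul_apply, map_sub, map_one]
    refine hU.avg_norm_le hs (hM (J 0)) _ f fun τ₀ hτ₀ => ?_
    have h1 := ih (fun i => J i.succ) (B * (u (J 0) τ₀ - 1)) fun τ hτ => by
      have := h (Fin.cons τ₀ τ) (Fin.cases hτ₀ hτ)
      rw [Fin.prod_univ_succ, ← mul_assoc] at this
      simpa using this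
    rwa [mul_right_comm, map_mul_apply, map_sub, map_one, hu] at h1

/-- `(I - ∏ⱼ Mⱼ)^r` is dominated by the mixed modulus: `I - ∏ⱼ Mⱼ` telescopes into a sum of
multiples of the `Mⱼ - I`, and the `r`-th power is expanded. -/
lemma IsCommGroups.norm_one_sub_pow_le (hU : IsCommGroups U) (hu : ∀ j t, φ (u j t) = U j t)
    {s : ℝ} (hs : 0 < s) {m : Fin n → A} (hm : ∀ j, ‖φ (m j)‖ ≤ 1)
    (hM : ∀ j f, φ (m j) f = s⁻¹ • ∫ τ in (0 : ℝ)..s, U j τ f) (r : ℕ) (f : E) :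
    ‖φ ((1 - ∏ j, m j) ^ r) f‖ ≤ mixedMod U r s f := by
  obtain ⟨c, hc, hsum⟩ : ∃ c : Fin n → A, (∀ j, ‖φ (c j)‖ ≤ 1) ∧
      1 - ∏ j, m j = ∑ j, c j * (m j - 1) := by
    refine ⟨fun j => -∏ i ∈ Finset.univ.filter (· < j), m i, fun j => ?_, ?_⟩
    · rw [map_neg, norm_neg]
      simpa using norm_map_prod_le φ (Finset.univ.filter (· < j)) m hm
    · have h1 := Finset.prod_one_sub_ordered Finset.univ fun j => 1 - m j
      have h2 : ∀ j, 1 - (1 - m j) = m j := fun j => by ring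
      simp only [h2] at h1
      rw [h1, _root_.sub_sub_cancel]
      exact Finset.sum_congr rfl fun j _ => by ring
  rw [hsum, ← Fin.prod_const, Finset.prod_univ_sum, map_sum, _root_.sum_apply,
    Fintype.piFinset_univ]
  refine (norm_sum_le _ _).trans (Finset.sum_le_sum fun J _ => ?_)
  rw [Finset.prod_mul_distrib]
  have h1 := hU.norm_prod_avg_le hu hs hM J 1 f fun τ hτ => by
    rw [one_mul]; exact hU.le_mixedMod_term hu f J τ hτ
  rw [one_mul] at h1
  refine (norm_map_apply_le φ _ _ f).trans ((mul_le_of_le_one_left (norm_nonneg _) ?_).trans h1)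
  simpa using norm_map_prod_le φ Finset.univ (fun i => c (J i)) fun i => hc _

/-- `Θ_{j₁}⋯Θ_{j_k} M_{j₁}⋯M_{j_k} f = s^{-k} ∏ᵢ (U_{jᵢ}(s) - I) f` for the averages `M_j` over
`[0,s]`. -/
lemma IsCommGroups.isIterDeriv_avg (hU : IsCommGroups U) (hu : ∀ j t, φ (u j t) = U j t)
    {s : ℝ} {m : Fin n → A}
    (hM : ∀ j f, φ (m j) f = s⁻¹ • ∫ τ in (0 : ℝ)..s, U j τ f) (L : List (Fin n)) (f : E) :
    IsIterDeriv U L (φ (L.map m).prod f)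
      (s⁻¹ ^ L.length • φ (L.map fun j => u j s - 1).prod f) := by
  induction L generalizing f with
  | nil => simp [IsIterDeriv]
  | cons j L ih =>
    refine ⟨φ (m j) (s⁻¹ ^ L.length • φ (L.map fun j => u j s - 1).prod f), ?_, ?_⟩
    · have := ih (φ (m j) f)
      rw [← map_mul_apply, ← map_mul_apply, mul_comm _ (m j), mul_comm _ (m j)] at this
      rwa [ContinuousLinearMap.map_smul_of_tower, ← map_mul_apply, List.map_cons, List.prod_cons]
    · have := hU.avg_genDeriv (hM j) (s⁻¹ ^ L.length • φ (L.map fun j => u j s - 1).prod f)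
      rwa [← hu, ← map_one φ, ← map_sub, ContinuousLinearMap.map_smul_of_tower (φ (u j s - 1)),
        ← map_mul_apply, smul_smul, ← pow_succ'] at this

/-- The K-functional is dominated by the modulus of continuity up to the term `s^r ‖f‖`, using the
approximation `f₁ = (I - (I - P^r)^r) f` with `P` the product of the averages over `[0,s]`. -/
lemma IsCommGroups.Kfun_le_of_avg (hU : IsCommGroups U) (hu : ∀ j t, φ (u j t) = U j t)
    {s : ℝ} (hs : 0 < s) {m : Fin n → A} (hm : ∀ j, ‖φ (m j)‖ ≤ 1)
    (hM : ∀ j f, φ (m j) f = s⁻¹ • ∫ τ in (0 : ℝ)..s, U j τ f) (r : ℕ) (f : E) :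
    Kfun U r (s ^ r) f ≤ (r ^ r + (r + 1) ^ n * (r * 2 ^ r)) * mixedMod U r s f +
      s ^ r * (r * 2 ^ r * ‖f‖) := by
  set P : A := ∏ j, m j with hP
  set R : A := ∑ i ∈ Finset.range r, (1 - P ^ r) ^ i with hR
  have hP1 : ‖φ P‖ ≤ 1 := by simpa using norm_map_prod_le φ Finset.univ m hm
  have hPk : ∀ k, ‖φ (P ^ k)‖ ≤ 1 := fun k => by simpa using norm_map_pow_le φ P k hP1
  have hRn : ‖φ R‖ ≤ r * 2 ^ r := by
    have := norm_map_sum_le φ (Finset.range r) (fun i => (1 - P ^ r) ^ i) (c := 2 ^ r)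
      fun i hi => (norm_map_pow_le φ _ i (norm_map_one_sub_le (hPk r))).trans
        (pow_le_pow_right₀ one_le_two (Finset.mem_range.1 hi).le)
    rwa [Finset.card_range] at this
  have hfac : 1 - (1 - P ^ r) ^ r = P ^ r * R := by
    rw [hR, ← mul_neg_geom_sum, _root_.sub_sub_cancel]
  have hΩ := mixedMod_nonneg (U := U) r s f
  -- The geometric series exhibits `I - P^r` as a multiple of `I - P`.
  have h0 : ‖f - φ (P ^ r * R) f‖ ≤ r ^ r * mixedMod U r s f := by
    have e1 : f - φ (P ^ r * R) f =
        φ ((∑ i ∈ Finset.range r, P ^ i) ^ r * (1 - P) ^ r) f := by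
      rw [← mul_pow, mul_comm _ (1 - P), mul_neg_geom_sum, ← hfac, map_sub, map_one]
      simp
    rw [e1]
    refine (norm_map_apply_le φ _ _ f).trans ?_
    refine mul_le_mul (norm_map_pow_le φ _ r ?_) (hU.norm_one_sub_pow_le hu hs hm hM r f)
      (norm_nonneg _) (by positivity)
    simpa using norm_map_sum_le φ (Finset.range r) (fun i => P ^ i) (c := 1) fun i _ => hPk i
  have h1 : ‖φ (P ^ r * R) f‖ ≤ r * 2 ^ r * ‖f‖ := by
    refine ContinuousLinearMap.le_of_opNorm_le _ ?_ f
    refine (norm_map_mul_le φ _ _).trans ((mul_le_of_le_one_left (norm_nonneg _) (hPk r)).trans hRn)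
  -- One average is split off `P^r` for each of the `r` derivatives.
  have hder : ∀ a : Fin n → ℕ, ∑ i, a i = r → ∃ g,
      IsIterDeriv U (multiIndexList a) (φ (P ^ r * R) f) g ∧
      s ^ r * ‖g‖ ≤ r * 2 ^ r * mixedMod U r s f := by
    intro a ha
    have hlen : (multiIndexList a).length = r := (length_multiIndexList a).trans ha
    obtain ⟨N, hN, hNP⟩ := exists_pow_prod_eq hm (multiIndexList a)
    have hd := hU.isIterDeriv_avg hu hM (multiIndexList a) (φ (N * R) f)
    have hb := hU.norm_list_le_mixedMod hu hs.le (multiIndexList a) f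
    rw [hlen] at hNP hd hb
    rw [← map_mul_apply, ← map_mul_apply, ← mul_assoc, ← hNP] at hd
    refine ⟨_, hd, ?_⟩
    rw [norm_smul, norm_pow, norm_inv, Real.norm_of_nonneg hs.le, ← mul_assoc, ← mul_pow,
      mul_inv_cancel₀ hs.ne', one_pow, one_mul, mul_comm _ (N * R)]
    refine (norm_map_apply_le φ _ _ f).trans
      (mul_le_mul ?_ hb (norm_nonneg _) (by positivity))
    exact (norm_map_mul_le φ _ _).trans ((mul_le_of_le_one_left (norm_nonneg _) hN).trans hRn)
  have hW : s ^ r * WNorm U r (φ (P ^ r * R) f) ≤ s ^ r * (r * 2 ^ r * ‖f‖) +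
      (r + 1) ^ n * (r * 2 ^ r * mixedMod U r s f) := by
    rw [WNorm, mul_add, Finset.mul_sum (s := Finset.filter _ _)]
    refine add_le_add (by gcongr) ?_
    refine (Finset.sum_le_card_nsmul _ _ (r * 2 ^ r * mixedMod U r s f) fun a ha => ?_).trans ?_
    · obtain ⟨g, hg, hgn⟩ := hder a (Finset.mem_filter.1 ha).2.1
      rwa [iterDerivVal_eq hg]
    · rw [nsmul_eq_mul]
      refine mul_le_mul_of_nonneg_right ?_ (by positivity)
      refine (Nat.cast_le.2 (Finset.card_filter_le _ _)).trans_eq ?_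
      simp
  have hK := Kfun_le (U := U) (t := s ^ r) (by positivity) f (φ (P ^ r * R) f)
    (fun a ha => (hder a ha).imp fun _ h => h.1)
  calc _ ≤ _ := hK
    _ ≤ r ^ r * mixedMod U r s f + (s ^ r * (r * 2 ^ r * ‖f‖) +
      (r + 1) ^ n * (r * 2 ^ r * mixedMod U r s f)) := add_le_add h0 hW
    _ = _ := by ring

end Approximation

section Equivalence

universe v

variable {E : Type v} [NormedAddCommGroup E] [NormedSpace ℂ E] [CompleteSpace E] {n : ℕ}
  {U : Fin n → ℝ → E →L[ℂ] E}

/-- The groups and their averages live in a commutative ring of operators, the double centralizer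
of the groups. -/
lemma IsCommGroups.exists_commRing (hU : IsCommGroups U) :
    ∃ (A : Type v) (_ : CommRing A) (φ : A →+* (E →L[ℂ] E)) (u : Fin n → ℝ → A),
      (∀ j t, φ (u j t) = U j t) ∧
      ∀ s : ℝ, 0 < s → ∃ m : Fin n → A, (∀ j, ‖φ (m j)‖ ≤ 1) ∧
        ∀ j f, φ (m j) f = s⁻¹ • ∫ τ in (0 : ℝ)..s, U j τ f := by
  set S : Set (E →L[ℂ] E) := Set.range fun x : Fin n × ℝ => U x.1 x.2 with hS
  have hcomm : ∀ a ∈ S, ∀ b ∈ S, a * b = b * a := by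
    rintro _ ⟨x, rfl⟩ _ ⟨y, rfl⟩
    exact hU.comm _ _ _ _
  let A := Subring.centralizer (Subring.centralizer S : Set (E →L[ℂ] E))
  let instA : CommRing A :=
    { (inferInstance : Ring A) with
      mul_comm := fun a b => Subtype.ext
        (Set.centralizer_centralizer_comm_of_comm hcomm a a.2 b b.2) }
  refine ⟨A, instA, A.subtype,
    fun j t => ⟨U j t, Set.subset_centralizer_centralizer ⟨(j, t), rfl⟩⟩, fun j t => rfl,
    fun s hs => ?_⟩
  choose M hM1 hM using fun j => hU.exists_avg j hs
  refine ⟨fun j => ⟨M j, fun B hB => ?_⟩, hM1, hM⟩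
  exact hU.avg_comm (hM j) B fun t => (hB _ ⟨(j, t), rfl⟩).symm

/-- Up to the lower-order term `‖f‖ min(1, s^r)`, the K-functional and the mixed modulus of
continuity are equivalent. -/
lemma IsCommGroups.exists_equiv (hU : IsCommGroups U) {r : ℕ} (hr : r ≠ 0) :
    ∃ A : ℝ, 0 ≤ A ∧ ∀ (f : E) (s : ℝ), 0 < s →
      mixedMod U r s f ≤ A * Kfun U r (s ^ r) f ∧
      Kfun U r (s ^ r) f ≤ A * (mixedMod U r s f + ‖f‖ * min 1 (s ^ r)) := by
  obtain ⟨A, _, φ, u, hu, hm⟩ := hU.exists_commRing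
  set a : ℝ := (n : ℝ) ^ r * 2 ^ r + 1 with ha
  set b : ℝ := r ^ r + (r + 1) ^ n * (r * 2 ^ r) with hb
  have ha1 : 1 ≤ a := by rw [ha]; exact le_add_of_nonneg_left (by positivity)
  have hb0 : 0 ≤ b := by positivity
  have hbr : r * 2 ^ r ≤ b := by
    have h1 : (1 : ℝ) ≤ (r + 1) ^ n := one_le_pow₀ (by simp)
    have h2 : (0 : ℝ) ≤ r * 2 ^ r := by positivity
    have h3 : (0 : ℝ) ≤ (r : ℝ) ^ r := by positivity
    rw [hb]
    nlinarith
  refine ⟨a + b, by linarith, fun f s hs => ?_⟩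
  have hsr : 0 ≤ s ^ r := by positivity
  have hK := Kfun_nonneg (U := U) (r := r) hsr f
  have hΩ := mixedMod_nonneg (U := U) r s f
  constructor
  · refine (hU.mixedMod_le_Kfun hu hr hs.le f).trans ?_
    exact mul_le_mul_of_nonneg_right (by linarith) hK
  · obtain ⟨m, hm1, hM⟩ := hm s hs
    rcases le_total (s ^ r) 1 with h | h
    · rw [min_eq_right h]
      refine (hU.Kfun_le_of_avg hu hs hm1 hM r f).trans ?_
      have h4 : s ^ r * (r * 2 ^ r * ‖f‖) ≤ b * (‖f‖ * s ^ r) := by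
        calc _ = r * 2 ^ r * (‖f‖ * s ^ r) := by ring
          _ ≤ _ := by gcongr
      have h5 : 0 ≤ a * (mixedMod U r s f + ‖f‖ * s ^ r) := by positivity
      linarith
    · rw [min_eq_left h, mul_one]
      refine (Kfun_le_norm hsr f).trans ?_
      have : ‖f‖ ≤ 1 * (mixedMod U r s f + ‖f‖) := by linarith
      refine this.trans ?_
      gcongr
      linarith

end Equivalence

/-! ### Equivalence of the norms -/

lemma IsMellinTranslation.isCommGroups {n : ℕ} {p : ℝ≥0∞} [Fact (1 ≤ p)]
    {U : Fin n → ℝ → (Lp ℂ p (mellinMeasure n) →L[ℂ] Lp ℂ p (mellinMeasure n))}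
    (hU : IsMellinTranslation p U) (hp : p ≠ ∞) : IsCommGroups U :=
  ⟨hU.norm_le, hU.zero, hU.add, hU.commute, hU.continuous hp⟩

/-- The Besov–Mellin space `B^α_{p,q}` coincides with the interpolation space
`(X^p, W^r_p)^K_{α/r,q}`: the modulus-of-continuity norm and the K-functional norm are
equivalent (in `ℝ≥0∞`; in particular, one is finite iff the other is). -/
theorem besov_mellin_interpolation {n : ℕ} (p : ℝ≥0∞) [Fact (1 ≤ p)] (hp : p ≠ ∞)
    (U : Fin n → ℝ → (Lp ℂ p (mellinMeasure n) →L[ℂ] Lp ℂ p (mellinMeasure n)))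
    (hU : IsMellinTranslation p U)
    (r : ℕ) (α q : ℝ) (hq : 1 ≤ q) (hα : 0 < α) (hαr : α < (r : ℝ)) :
    ∃ c C : ℝ, 0 < c ∧ 0 < C ∧ ∀ f : Lp ℂ p (mellinMeasure n),
      ENNReal.ofReal c * besovOmega U r α q f ≤ besovK U r α q f ∧
      besovK U r α q f ≤ ENNReal.ofReal C * besovOmega U r α q f := by
  have hr : r ≠ 0 := by
    rintro rfl
    rw [Nat.cast_zero] at hαr
    linarith
  obtain ⟨A, hA, hequiv⟩ := hU.isCommGroups hp |>.exists_equiv hr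
  obtain ⟨C, hC, hle⟩ := besovSemi_le hq hα hαr hA
  have hadd : ∀ x y b : ℝ≥0∞, x ≤ ENNReal.ofReal C * (y + b) →
      b + x ≤ ENNReal.ofReal (1 + C) * (b + y) := fun x y b h => by
    rw [ENNReal.ofReal_add zero_le_one hC, ENNReal.ofReal_one, add_mul, one_mul, add_comm b y]
    exact add_le_add le_add_self h
  have hΩK : ∀ f, besovOmega U r α q f ≤ ENNReal.ofReal (1 + C) * besovK U r α q f := fun f => by
    refine hadd _ _ _ ((hle (fun s => mixedMod U r s f) (fun s => Kfun U r (s ^ r) f) 0 le_rfl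
      fun s hs => ⟨mixedMod_nonneg r s f, Kfun_nonneg (by positivity) f, ?_⟩).trans ?_)
    · simpa using (hequiv f s hs).1
    · rw [ENNReal.ofReal_zero, add_zero]
      gcongr
      exact le_self_add
  have hKΩ : ∀ f, besovK U r α q f ≤ ENNReal.ofReal (1 + C) * besovOmega U r α q f := fun f =>
    hadd _ _ _ (hle (fun s => Kfun U r (s ^ r) f) (fun s => mixedMod U r s f) ‖f‖ (norm_nonneg f)
      fun s hs => ⟨Kfun_nonneg (by positivity) f, mixedMod_nonneg r s f, (hequiv f s hs).2⟩)
  refine ⟨(1 + C)⁻¹, 1 + C, by positivity, by positivity, fun f => ⟨?_, hKΩ f⟩⟩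
  calc ENNReal.ofReal (1 + C)⁻¹ * besovOmega U r α q f
      ≤ ENNReal.ofReal (1 + C)⁻¹ * (ENNReal.ofReal (1 + C) * besovK U r α q f) := by
        gcongr
        exact hΩK f
    _ = besovK U r α q f := by
        rw [← mul_assoc, ← ENNReal.ofReal_mul (by positivity),
          inv_mul_cancel₀ (by positivity), ENNReal.ofReal_one, one_mul]
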